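/- arXiv:2308.04130 — 9 statements merged into one kernel-verified Lean document; each statement's English description precedes it below -/
import Mathlib

section
/- For all real numbers S, N, L, K with 0 ≤ N < L < K, it holds that ((L - (K - S)₊)₊ - N)₊ = (S - (K - (L - N)))₊ - (S - K)₊, where x₊ := max(x, 0). (Thus a Call with strike N written on a Put with strike L on a Put with strike K equals a Call-spread with strikes K - (L - N) and K on the original underlier.) -/
section LatticeOrderedGroup

variable {α : Type*} [AddCommGroup α] [Lattice α] [IsOrderedAddMonoid α]

theorem posPart_posPart_sub_of_nonneg (a : α) {b : α} (hb : 0 ≤ b) : (a⁺ - b)⁺ = (a - b)⁺ := by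
  have neg_sup_zero : -b ⊔ 0 = 0 := sup_eq_right.mpr (neg_nonpos.mpr hb)
  calc (a⁺ - b)⁺ = (a - b) ⊔ (-b ⊔ 0) := by
        rw [posPart_def, posPart_def, sup_sub, zero_sub, sup_assoc]
    _ = (a - b)⁺ := by rw [neg_sup_zero, posPart_def]

theorem posPart_sub_negPart_eq_posPart_add_sub_posPart (a : α) {b : α} (hb : 0 ≤ b) :
    (b - a⁻)⁺ = (b + a)⁺ - a⁺ := by
  have le_add : a ≤ b + a := le_add_of_nonneg_left hb
  -- For `a = S - K` the identity `a⁺ - a⁻ = a` is put-call parity, so adding the call `a⁺` to both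
  -- sides cancels the put `a⁻` inside the positive part.
  refine eq_sub_of_add_eq ?_
  calc (b - a⁻)⁺ + a⁺ = (b + (a⁺ - a⁻)) ⊔ a⁺ := by
        rw [posPart_def (b - a⁻), sup_add, zero_add, sub_add_eq_add_sub, add_sub_assoc]
    _ = (b + a) ⊔ (a ⊔ 0) := by rw [posPart_sub_negPart, posPart_def]
    _ = (b + a)⁺ := by rw [← sup_assoc, sup_eq_left.mpr le_add, posPart_def]

theorem call_on_put_on_put_is_call_spread_general (S K : α) {N L : α} (hN : 0 ≤ N) (hNL : N ≤ L) :
    ((L - (K - S)⁺)⁺ - N)⁺ = (S - (K - (L - N)))⁺ - (S - K)⁺ :=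
  calc ((L - (K - S)⁺)⁺ - N)⁺ = (L - (K - S)⁺ - N)⁺ := posPart_posPart_sub_of_nonneg _ hN
    _ = (L - N - (S - K)⁻)⁺ := by rw [sub_right_comm, ← neg_sub S K, posPart_neg]
    _ = (L - N + (S - K))⁺ - (S - K)⁺ :=
      posPart_sub_negPart_eq_posPart_add_sub_posPart _ (sub_nonneg.mpr hNL)
    _ = (S - (K - (L - N)))⁺ - (S - K)⁺ := by rw [add_comm, ← sub_add]

end LatticeOrderedGroup

/-- A Call with strike `N` written on a Put with strike `L` on a Put with strike `K`
(with `0 ≤ N < L < K`) equals a Call-spread with strikes `K - (L - N)` and `K` on the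
original underlier: `((L - (K - S)₊)₊ - N)₊ = (S - (K - (L - N)))₊ - (S - K)₊`. -/
theorem call_on_put_on_put_is_call_spread (S N L K : ℝ)
    (hN : 0 ≤ N) (hNL : N < L) (hLK : L < K) :
    max (max (L - max (K - S) 0) 0 - N) 0
      = max (S - (K - (L - N))) 0 - max (S - K) 0 :=
  call_on_put_on_put_is_call_spread_general S K hN hNL.le
end

section
/- Let S ≥ 0 and let f : [0, ∞) → ℝ be convex, nonincreasing, and satisfy (S - x)₊ ≤ f(x) ≤ S for all x ≥ 0 (f is a Call price curve in the strike variable). Then for all K, M ≥ 0 it holds that (f(K) - M)₊ ≤ f(K + M) ≤ f(K). In particular the map M ↦ f(K + M) (the relative Call-on-Call price as a function of its strike M, for underlier value X = f(K)) is convex, nonincreasing, has slopes bounded below by -1, and satisfies (X - M)₊ ≤ f(K + M) ≤ X. -/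
/-!
A convex function has its smallest slopes at the left end of its domain. For a Call price curve
`f` with spot `S = f 0`, the bound `S - x ≤ f x` says that the slopes issuing from `0` are at
least `-1`, so every slope is; between `K` and `K + M` this reads `f K - M ≤ f (K + M)`. Hence
the relative Call-on-Call prices `M ↦ f (K + M)` again form a Call price curve, with spot `f K`.
-/

section

variable {𝕜 : Type*} [Field 𝕜] [LinearOrder 𝕜]

theorem le_slope_of_convexOn_of_isLeast [IsStrictOrderedRing 𝕜] {s : Set 𝕜} {f : 𝕜 → 𝕜}
    {a c x y : 𝕜} (hf : ConvexOn 𝕜 s f) (ha : IsLeast s a)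
    (hc : ∀ z ∈ s, a < z → c ≤ slope f a z) (hx : x ∈ s) (hy : y ∈ s) (hxy : x < y) :
    c ≤ slope f x y := by
  rcases (ha.2 hx).eq_or_lt with rfl | hax
  · exact hc y hy hxy
  · calc
      c ≤ slope f a x := hc x hx hax
      _ = slope f x a := slope_comm f a x
      _ ≤ slope f x y := hf.slope_mono hx ⟨ha.1, hax.ne⟩ ⟨hy, hxy.ne'⟩ (hax.trans hxy).le

/-- `IsCallPriceCurve S f` says that `f`, as a function of the strike, is a Call price curve on an
underlying of value `S`. Only the values of `f` at nonnegative strikes are constrained. -/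
structure IsCallPriceCurve (S : 𝕜) (f : 𝕜 → 𝕜) : Prop where
  convexOn : ConvexOn 𝕜 (Set.Ici 0) f
  antitoneOn : AntitoneOn f (Set.Ici 0)
  bounds : ∀ x : 𝕜, 0 ≤ x → max (S - x) 0 ≤ f x ∧ f x ≤ S

namespace IsCallPriceCurve

variable {S K M : 𝕜} {f : 𝕜 → 𝕜}

theorem sub_le (hf : IsCallPriceCurve S f) (hK : 0 ≤ K) : S - K ≤ f K :=
  (le_max_left _ _).trans (hf.bounds K hK).1

theorem nonneg (hf : IsCallPriceCurve S f) (hK : 0 ≤ K) : 0 ≤ f K :=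
  (le_max_right _ _).trans (hf.bounds K hK).1

variable [IsStrictOrderedRing 𝕜]

theorem neg_one_le_slope {x y : 𝕜} (hf : IsCallPriceCurve S f) (hx : 0 ≤ x) (hxy : x < y) :
    -1 ≤ slope f x y := by
  refine le_slope_of_convexOn_of_isLeast hf.convexOn isLeast_Ici (fun z hz hz' ↦ ?_)
    hx (hx.trans hxy.le) hxy
  rw [slope_def_field, le_div_iff₀ (sub_pos.2 hz')]
  linarith [hf.sub_le hz, (hf.bounds 0 le_rfl).2]

theorem apply_sub_le_apply_add (hf : IsCallPriceCurve S f) (hK : 0 ≤ K) (hM : 0 ≤ M) :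
    f K - M ≤ f (K + M) := by
  rcases hM.eq_or_lt with rfl | hM
  · simp
  · have hslope := hf.neg_one_le_slope hK (lt_add_of_pos_right K hM)
    rw [slope_def_field, add_sub_cancel_left, le_div_iff₀ hM] at hslope
    linarith

end IsCallPriceCurve

theorem call_on_call_strike_properties_general [IsStrictOrderedRing 𝕜] {S K : 𝕜} {f : 𝕜 → 𝕜}
    (hf : IsCallPriceCurve S f) (hK : 0 ≤ K) :
    IsCallPriceCurve (f K) (fun M ↦ f (K + M)) where
  convexOn := (hf.convexOn.translate_right K).subset (fun _ hM ↦ add_nonneg hK hM) (convex_Ici 0)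
  antitoneOn _ hM _ hN hMN :=
    hf.antitoneOn (add_nonneg hK hM) (add_nonneg hK hN) (add_le_add_right hMN K)
  bounds _ hM :=
    ⟨max_le (hf.apply_sub_le_apply_add hK hM) (hf.nonneg (add_nonneg hK hM)),
      hf.antitoneOn hK (add_nonneg hK hM) (le_add_of_nonneg_right hM)⟩

end

/-- If `K ↦ f K` is a Call price curve (convex, nonincreasing, with
`(S - K)₊ ≤ f K ≤ S` on `[0, ∞)`), then for all `K, M ≥ 0` one has
`(f K - M)₊ ≤ f (K + M) ≤ f K`; in particular the relative Call-on-Call price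
`M ↦ f (K + M)` (with underlier value `X = f K`) is convex, nonincreasing, has slopes
bounded below by `-1`, and satisfies `(X - M)₊ ≤ f (K + M) ≤ X`. -/
theorem call_on_call_strike_properties (S : ℝ) (hS : 0 ≤ S) (f : ℝ → ℝ)
    (hconv : ConvexOn ℝ (Set.Ici 0) f)
    (hanti : AntitoneOn f (Set.Ici 0))
    (hbounds : ∀ x : ℝ, 0 ≤ x → max (S - x) 0 ≤ f x ∧ f x ≤ S) :
    ∀ K M : ℝ, 0 ≤ K → 0 ≤ M →
      (max (f K - M) 0 ≤ f (K + M) ∧ f (K + M) ≤ f K) ∧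
      ConvexOn ℝ (Set.Ici 0) (fun M => f (K + M)) ∧
      AntitoneOn (fun M => f (K + M)) (Set.Ici 0) := by
  intro K M hK hM
  have hshift := call_on_call_strike_properties_general ⟨hconv, hanti, hbounds⟩ hK
  exact ⟨hshift.bounds M hM, hshift.convexOn, hshift.antitoneOn⟩
end

section
/- Let c : (0, ∞) → ℝ be twice continuously differentiable, convex (c'' ≥ 0), nonincreasing (c' ≤ 0), and strictly positive. Then the function l ↦ c'(l) / (c(l) - l·c'(l)) is nondecreasing on (0, ∞). (This is the condition ensuring that, for a homogeneous pricing function with normalized price c, the Call-on-Call price K ↦ Ĉ_K(X, M) is nondecreasing in the relative underlying strike K.) -/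
/-!
For `0 ≤ x ≤ y`, let `a ≤ b` be the slopes of supporting lines of `c` at `x` and `y`, and `p`, `q`
the values of these lines at `0`, both assumed positive. Then `a / p ≤ b / q` amounts to
`0 ≤ b * p - a * q = b * (p - q) + (b - a) * q`, and convexity gives `0 ≤ p - q ≤ y * (b - a)`.
If `0 ≤ b`, both terms are nonnegative; if `b ≤ 0`, their sum is at least
`b * (y * (b - a)) + (b - a) * q = (b - a) * c y`.
-/

open Set

section Subgradient

variable {R : Type*} [CommRing R] [LinearOrder R]

/-- `g` selects subgradients of `c` on `s`: for each `x ∈ s`, the line of slope `g x` through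
`(x, c x)` lies below the graph of `c` over `s`. It replaces the derivative of a convex function
that need not be differentiable. -/
def IsSubgradientOn (c g : R → R) (s : Set R) : Prop :=
  ∀ ⦃x⦄, x ∈ s → ∀ ⦃y⦄, y ∈ s → c x + g x * (y - x) ≤ c y

variable [IsStrictOrderedRing R] {c g : R → R} {s : Set R} {x y : R}

namespace IsSubgradientOn

theorem monotoneOn (hg : IsSubgradientOn c g s) : MonotoneOn g s := by
  intro x hx y hy hxy
  rcases hxy.eq_or_lt with rfl | hlt
  · rfl
  · have hprod : g x * (y - x) ≤ g y * (y - x) := by linarith [hg hx hy, hg hy hx]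
    exact le_of_mul_le_mul_right hprod (sub_pos.2 hlt)

theorem intercept_sub_le (hg : IsSubgradientOn c g s) (hx : x ∈ s) (hy : y ∈ s) :
    (c x - x * g x) - (c y - y * g y) ≤ y * (g y - g x) := by
  linarith [hg hx hy]

theorem intercept_antitoneOn (hg : IsSubgradientOn c g s) (hs : s ⊆ Ici 0) :
    AntitoneOn (fun x => c x - x * g x) s := by
  intro x hx y hy hxy
  have hgap : 0 ≤ x * (g y - g x) :=
    mul_nonneg (hs hx) (sub_nonneg.2 (hg.monotoneOn hx hy hxy))
  linarith [hg.intercept_sub_le hy hx]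

theorem slope_mul_intercept_le (hg : IsSubgradientOn c g s) (hs : s ⊆ Ici 0)
    (hx : x ∈ s) (hy : y ∈ s) (hxy : x ≤ y) (hcy : 0 ≤ c y) (hqy : 0 ≤ c y - y * g y) :
    g x * (c y - y * g y) ≤ g y * (c x - x * g x) := by
  have hslope : 0 ≤ g y - g x := sub_nonneg.2 (hg.monotoneOn hx hy hxy)
  rw [← sub_nonneg]
  have hsplit : g y * (c x - x * g x) - g x * (c y - y * g y) =
      g y * ((c x - x * g x) - (c y - y * g y)) + (g y - g x) * (c y - y * g y) := by ring
  rw [hsplit]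
  rcases le_total 0 (g y) with hgy | hgy
  · have hintercept : 0 ≤ (c x - x * g x) - (c y - y * g y) :=
      sub_nonneg.2 (hg.intercept_antitoneOn hs hx hy hxy)
    exact add_nonneg (mul_nonneg hgy hintercept) (mul_nonneg hslope hqy)
  · calc 0 ≤ (g y - g x) * c y := mul_nonneg hslope hcy
      _ = g y * (y * (g y - g x)) + (g y - g x) * (c y - y * g y) := by ring
      _ ≤ _ := by
        gcongr ?_ + _
        exact mul_le_mul_of_nonpos_left (hg.intercept_sub_le hx hy) hgy

end IsSubgradientOn

end Subgradient

theorem isSubgradientOn_deriv_of_convexOn {c : ℝ → ℝ} {s : Set ℝ} (hc : ConvexOn ℝ s c)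
    (hdiff : ∀ x ∈ s, DifferentiableAt ℝ c x) : IsSubgradientOn c (deriv c) s := by
  intro x hx y hy
  rcases lt_trichotomy x y with hxy | rfl | hyx
  · have hslope := hc.deriv_le_slope hx hy hxy (hdiff x hx)
    rw [slope_def_field, le_div_iff₀ (sub_pos.2 hxy)] at hslope
    linarith
  · simp
  · have hslope := hc.slope_le_deriv hy hx hyx (hdiff x hx)
    rw [slope_def_field, div_le_iff₀ (sub_pos.2 hyx)] at hslope
    linarith

theorem isSubgradientOn_deriv_of_deriv2_nonneg {c : ℝ → ℝ} {s : Set ℝ} (hs : Convex ℝ s)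
    (hopen : IsOpen s) (hdiff : DifferentiableOn ℝ c s) (hdiff' : DifferentiableOn ℝ (deriv c) s)
    (hconvex : ∀ x ∈ s, 0 ≤ deriv (deriv c) x) : IsSubgradientOn c (deriv c) s :=
  isSubgradientOn_deriv_of_convexOn (convexOn_of_deriv2_nonneg' hs hdiff hdiff' hconvex)
    fun _ hx => hdiff.differentiableAt (hopen.mem_nhds hx)

/-- If `g = c'` and `C(S, K) = S * c(K / S)`, then `c x - x * g x` at `x = K / S` is the derivative
of `C` in `S`, so `hdelta` is what makes `S ↦ C(S, K)` invertible. -/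
theorem homogeneous_monotonicity_condition_general {𝕜 : Type*} [Field 𝕜] [LinearOrder 𝕜]
    [IsStrictOrderedRing 𝕜] {c g : 𝕜 → 𝕜} {s : Set 𝕜} (hg : IsSubgradientOn c g s)
    (hs : s ⊆ Ici 0) (hc : ∀ x ∈ s, 0 ≤ c x) (hdelta : ∀ x ∈ s, 0 < c x - x * g x) :
    MonotoneOn (fun x => g x / (c x - x * g x)) s := fun x hx y hy hxy =>
  (div_le_div_iff₀ (hdelta x hx) (hdelta y hy)).2
    (hg.slope_mul_intercept_le hs hx hy hxy (hc y hy) (hdelta y hy).le)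

/-- For a twice continuously differentiable, convex (`c'' ≥ 0`), nonincreasing
(`c' ≤ 0`), strictly positive normalized price `c` on `(0, ∞)`, the function
`l ↦ c'(l) / (c(l) - l·c'(l))` is nondecreasing on `(0, ∞)`. -/
theorem homogeneous_monotonicity_condition (c : ℝ → ℝ)
    (hsmooth : ContDiffOn ℝ 2 c (Set.Ioi 0))
    (hconvex : ∀ l ∈ Set.Ioi (0:ℝ), 0 ≤ deriv (deriv c) l)
    (hanti : ∀ l ∈ Set.Ioi (0:ℝ), deriv c l ≤ 0)
    (hpos : ∀ l ∈ Set.Ioi (0:ℝ), 0 < c l) :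
    MonotoneOn (fun l => deriv c l / (c l - l * deriv c l)) (Set.Ioi 0) := by
  have hsub : IsSubgradientOn c (deriv c) (Ioi 0) :=
    isSubgradientOn_deriv_of_deriv2_nonneg (convex_Ioi 0) isOpen_Ioi
      (hsmooth.differentiableOn two_ne_zero)
      ((hsmooth.deriv_of_isOpen isOpen_Ioi one_add_one_eq_two.le).differentiableOn one_ne_zero)
      hconvex
  have hdelta : ∀ l ∈ Ioi (0 : ℝ), 0 < c l - l * deriv c l := fun l hl =>
    sub_pos.2 ((mul_nonpos_of_nonneg_of_nonpos (le_of_lt hl) (hanti l hl)).trans_lt (hpos l hl))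
  exact homogeneous_monotonicity_condition_general hsub Ioi_subset_Ici_self
    (fun l hl => (hpos l hl).le) hdelta
end

section
/- Let v > 0 and, for k > 0, set d₁(k) = -log(k)/v + v/2 and d₂(k) = -log(k)/v - v/2. Then the function k ↦ k·φ(d₂(k)) / (v·Φ(d₁(k))) is strictly increasing on (0, ∞). (This is the condition ensuring that Black-Scholes Call-on-Call prices are convex with respect to the underlier; its proof reduces to the inequality x·Φ(x) + φ(x) > 0 for all real x.) -/
/-!
Since `k φ(d₂) = φ(d₁)` and `d₁` is strictly decreasing in `k`, it suffices that `φ / Φ` is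
strictly decreasing. Substituting `u = t + x` gives `Φ(x) / φ(x) = ∫_{t < 0} φ(t + x) / φ(x) dt`,
and for each fixed `t < 0` strict concavity of `log φ` makes the integrand strictly increasing
in `x`.
-/

open MeasureTheory

/-- The standard normal probability density function. -/
noncomputable def phi (x : ℝ) : ℝ := Real.exp (-x ^ 2 / 2) / Real.sqrt (2 * Real.pi)

/-- The standard normal cumulative distribution function. -/
noncomputable def Phi (x : ℝ) : ℝ := ∫ t in Set.Iic x, phi t

section Increments

variable {𝕜 : Type*} [Field 𝕜] [LinearOrder 𝕜] [IsStrictOrderedRing 𝕜]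

theorem strictAnti_add_sub_of_strictConcaveOn {g : 𝕜 → 𝕜} (hg : StrictConcaveOn 𝕜 Set.univ g)
    {h : 𝕜} (hh : 0 < h) : StrictAnti fun x => g (x + h) - g x := by
  intro x y hxy
  have left_secant : (g (y + h) - g x) / (y + h - x) < (g (x + h) - g x) / h := by
    simpa using hg.secant_strict_mono (Set.mem_univ x) (Set.mem_univ (x + h))
      (Set.mem_univ (y + h)) (by linarith) (by linarith) (by linarith)
  have right_secant : (g (y + h) - g y) / h < (g (y + h) - g x) / (y + h - x) := by
    have := hg.secant_strict_mono (Set.mem_univ (y + h)) (Set.mem_univ x)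
      (Set.mem_univ y) (by linarith) (by linarith) hxy
    rw [← neg_div_neg_eq, neg_sub, neg_sub, ← neg_div_neg_eq (g x - _), neg_sub, neg_sub] at this
    simpa using this
  exact (div_lt_div_iff_of_pos_right hh).1 (right_secant.trans left_secant)

end Increments

section SetIntegral

variable {α : Type*} [MeasurableSpace α] {μ : Measure α} {s : Set α} {f g : α → ℝ}

theorem setIntegral_pos_of_forall_pos (hs : MeasurableSet s) (hμs : μ s ≠ 0)
    (hf : IntegrableOn f s μ) (hpos : ∀ t ∈ s, 0 < f t) : 0 < ∫ t in s, f t ∂μ := by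
  have hnonneg : 0 ≤ᵐ[μ.restrict s] f :=
    (ae_restrict_mem hs).mono fun t ht => (hpos t ht).le
  have hsupport : Function.support f ∩ s = s :=
    Set.inter_eq_right.2 fun t ht => (hpos t ht).ne'
  rw [setIntegral_pos_iff_support_of_nonneg_ae hnonneg hf, hsupport]
  exact hμs.bot_lt

theorem setIntegral_lt_setIntegral_of_forall_lt (hs : MeasurableSet s) (hμs : μ s ≠ 0)
    (hf : IntegrableOn f s μ) (hg : IntegrableOn g s μ) (hlt : ∀ t ∈ s, f t < g t) :
    ∫ t in s, f t ∂μ < ∫ t in s, g t ∂μ := by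
  rw [← sub_pos, ← integral_sub hg hf]
  exact setIntegral_pos_of_forall_pos hs hμs (hg.sub hf) fun t ht => sub_pos.2 (hlt t ht)

end SetIntegral

section Translation

variable {E : Type*} [NormedAddCommGroup E]

theorem integrableOn_Iio_comp_add_right_iff {f : ℝ → E} {a x : ℝ} :
    IntegrableOn (fun t => f (t + x)) (Set.Iio a) ↔ IntegrableOn f (Set.Iio (a + x)) := by
  simpa [Function.comp_def] using
    (measurePreserving_add_right volume x).integrableOn_comp_preimage
      (measurableEmbedding_addRight x) (f := f) (s := Set.Iio (a + x))

theorem integral_Iio_comp_add_right [NormedSpace ℝ E] (f : ℝ → E) (a x : ℝ) :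
    ∫ t in Set.Iio a, f (t + x) = ∫ u in Set.Iio (a + x), f u := by
  simpa using (measurePreserving_add_right volume x).setIntegral_preimage_emb
    (measurableEmbedding_addRight x) f (Set.Iio (a + x))

end Translation

section LogConcave

variable {f : ℝ → ℝ}

theorem strictMono_add_left_div_of_strictConcaveOn_log (hpos : ∀ x, 0 < f x)
    (hlog : StrictConcaveOn ℝ Set.univ fun x => Real.log (f x)) {t : ℝ} (ht : t < 0) :
    StrictMono fun x => f (t + x) / f x := by
  intro x y hxy
  have hincr := strictAnti_add_sub_of_strictConcaveOn hlog (neg_pos.2 ht)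
    (add_lt_add_right hxy t)
  rw [← Real.log_lt_log_iff (div_pos (hpos _) (hpos _)) (div_pos (hpos _) (hpos _)),
    Real.log_div (hpos _).ne' (hpos _).ne', Real.log_div (hpos _).ne' (hpos _).ne']
  simp only [add_neg_cancel_comm] at hincr
  linarith

theorem strictMono_integral_Iic_div_of_strictConcaveOn_log (hpos : ∀ x, 0 < f x)
    (hlog : StrictConcaveOn ℝ Set.univ fun x => Real.log (f x))
    (hf : ∀ x, IntegrableOn f (Set.Iic x)) :
    StrictMono fun x => (∫ u in Set.Iic x, f u) / f x := by
  intro x y hxy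
  have hshift (z : ℝ) : ∫ u in Set.Iic z, f u = ∫ t in Set.Iio 0, f (t + z) := by
    rw [integral_Iio_comp_add_right, zero_add, integral_Iic_eq_integral_Iio]
  have hf_shift (z : ℝ) : IntegrableOn (fun t => f (t + z)) (Set.Iio 0) := by
    rw [integrableOn_Iio_comp_add_right_iff, zero_add]
    exact (hf z).mono_set Set.Iio_subset_Iic_self
  simp only [hshift, ← integral_div]
  exact setIntegral_lt_setIntegral_of_forall_lt measurableSet_Iio (by simp)
    ((hf_shift x).div_const _) ((hf_shift y).div_const _)
    fun _ ht => strictMono_add_left_div_of_strictConcaveOn_log hpos hlog ht hxy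

theorem strictAnti_div_integral_Iic_of_strictConcaveOn_log (hpos : ∀ x, 0 < f x)
    (hlog : StrictConcaveOn ℝ Set.univ fun x => Real.log (f x))
    (hf : ∀ x, IntegrableOn f (Set.Iic x)) :
    StrictAnti fun x => f x / ∫ u in Set.Iic x, f u := by
  intro x y hxy
  have hintegral_pos : 0 < ∫ u in Set.Iic x, f u :=
    setIntegral_pos_of_forall_pos measurableSet_Iic (by simp) (hf x) fun u _ => hpos u
  simpa only [inv_div] using inv_strictAnti₀ (div_pos hintegral_pos (hpos x))
    (strictMono_integral_Iic_div_of_strictConcaveOn_log hpos hlog hf hxy)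

end LogConcave

section StandardNormal

theorem phi_eq_gaussianPDFReal : phi = ProbabilityTheory.gaussianPDFReal 0 1 := by
  ext x
  simp [phi, ProbabilityTheory.gaussianPDFReal, div_eq_inv_mul]

theorem phi_pos (x : ℝ) : 0 < phi x := by
  unfold phi
  positivity

theorem integrable_phi : Integrable phi :=
  phi_eq_gaussianPDFReal ▸ ProbabilityTheory.integrable_gaussianPDFReal 0 1

theorem log_phi (x : ℝ) : Real.log (phi x) = -x ^ 2 / 2 - Real.log √(2 * Real.pi) := by
  rw [phi, Real.log_div (Real.exp_ne_zero _) (by positivity), Real.log_exp]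

theorem strictConcaveOn_log_phi : StrictConcaveOn ℝ Set.univ fun x => Real.log (phi x) := by
  refine ⟨convex_univ, fun x _ y _ hxy a b ha hb hab => ?_⟩
  have hsq : (a * x + b * y) ^ 2 < a * x ^ 2 + b * y ^ 2 :=
    (even_two.strictConvexOn_pow two_ne_zero).2 (Set.mem_univ x) (Set.mem_univ y) hxy ha hb hab
  simp only [log_phi, smul_eq_mul]
  linear_combination hsq / 2 - Real.log √(2 * Real.pi) * hab

theorem strictAnti_phi_div_Phi : StrictAnti fun x => phi x / Phi x :=
  strictAnti_div_integral_Iic_of_strictConcaveOn_log phi_pos strictConcaveOn_log_phi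
    fun _ => integrable_phi.integrableOn

theorem phi_sub (x v : ℝ) : phi (x - v) = Real.exp (v * x - v ^ 2 / 2) * phi x := by
  rw [phi, phi, ← mul_div_assoc, ← Real.exp_add]
  ring_nf

end StandardNormal

section BlackScholes

variable {v : ℝ}

theorem mul_phi_d₂_eq_phi_d₁ (hv : v ≠ 0) {k : ℝ} (hk : 0 < k) :
    k * phi (-Real.log k / v - v / 2) = phi (-Real.log k / v + v / 2) := by
  have hexponent : v * (-Real.log k / v + v / 2) - v ^ 2 / 2 = -Real.log k := by
    field_simp
    ring
  calc
    k * phi (-Real.log k / v - v / 2) = k * phi ((-Real.log k / v + v / 2) - v) := by ring_nf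
    _ = k * (k⁻¹ * phi (-Real.log k / v + v / 2)) := by
      rw [phi_sub, hexponent, Real.exp_neg, Real.exp_log hk]
    _ = phi (-Real.log k / v + v / 2) := mul_inv_cancel_left₀ hk.ne' _

theorem strictAntiOn_d₁ (hv : 0 < v) :
    StrictAntiOn (fun k => -Real.log k / v + v / 2) (Set.Ioi 0) := by
  intro a ha b _ hab
  have := Real.log_lt_log ha hab
  dsimp only
  gcongr

end BlackScholes

/-- With `d₁(k) = -log k / v + v/2` and `d₂(k) = -log k / v - v/2`, the function
`k ↦ k·φ(d₂(k)) / (v·Φ(d₁(k)))` is strictly increasing on `(0, ∞)`; this is the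
condition ensuring convexity of Black-Scholes Calls on Calls in the underlier. -/
theorem bs_convexity_condition (v : ℝ) (hv : 0 < v) :
    StrictMonoOn
      (fun k => k * phi (-Real.log k / v - v / 2) / (v * Phi (-Real.log k / v + v / 2)))
      (Set.Ioi 0) := by
  have hratio : StrictMonoOn
      (fun k => phi (-Real.log k / v + v / 2) / Phi (-Real.log k / v + v / 2)) (Set.Ioi 0) :=
    strictAnti_phi_div_Phi.comp_strictAntiOn (strictAntiOn_d₁ hv)
  intro a ha b hb hab
  simp only [mul_phi_d₂_eq_phi_d₁ hv.ne' ha, mul_phi_d₂_eq_phi_d₁ hv.ne' hb,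
    div_mul_eq_div_div_swap]
  exact div_lt_div_of_pos_right (hratio ha hb hab) hv
end

section
/- Let c be in the Tehranchi space 𝕔 and let k ≥ 0 with c(k) > 0. Then the function 𝕋_k c defined by (𝕋_k c)(m) = c(k + c(k)·m)/c(k) for m ≥ 0 also belongs to 𝕔: it is convex and satisfies (1 - m)₊ ≤ (𝕋_k c)(m) ≤ 1 for all m ≥ 0. Moreover (𝕋_0 c) = c. -/
/-- The Tehranchi space: convex functions `c` with `(1 - m)₊ ≤ c m ≤ 1` for `m ≥ 0`. -/
def TehranchiSpace (c : ℝ → ℝ) : Prop :=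
  ConvexOn ℝ (Set.Ici 0) c ∧ ∀ m : ℝ, 0 ≤ m → max (1 - m) 0 ≤ c m ∧ c m ≤ 1

/-! Convexity of `𝕋_k c` is affine rescaling. A convex function bounded above on a half-line is
nonincreasing, so `𝕋_k c ≤ 1`. For the lower bound, `1 - m ≤ c m` with equality at `0` says that the
convex function `m ↦ c m + m` is minimal at `0`, hence nondecreasing; so every slope of `c` is at
least `-1`. This last property is invariant under the rescaling, whose vertical and horizontal
factors are both `c k`, and together with `(𝕋_k c) 0 = 1` it gives `1 - m ≤ (𝕋_k c) m`. -/

section Convex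

variable {𝕜 : Type*} [Field 𝕜] [LinearOrder 𝕜] [IsStrictOrderedRing 𝕜] {s : Set 𝕜}

theorem monotoneOn_of_convexOn_of_isMinOn {β : Type*} [AddCommMonoid β] [LinearOrder β]
    [IsOrderedCancelAddMonoid β] [Module 𝕜 β] [PosSMulStrictMono 𝕜 β] {f : 𝕜 → β} {a : 𝕜}
    (hf : ConvexOn 𝕜 s f) (ha : a ∈ s) (hmin : IsMinOn f s a) : MonotoneOn f (s ∩ Set.Ici a) := by
  rintro x ⟨hx, hax⟩ y ⟨hy, -⟩ hxy
  rcases (Set.mem_Ici.1 hax).eq_or_lt with rfl | hax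
  · exact hmin hy
  · exact hf.le_right_of_left_le'' ha hy hax hxy (hmin hx)

theorem antitoneOn_of_convexOn_of_bddAbove {f : 𝕜 → 𝕜} (hs : IsUpperSet s)
    (hf : ConvexOn 𝕜 s f) (hbdd : BddAbove (f '' s)) : AntitoneOn f s := by
  intro x hx y hy hxy
  obtain ⟨M, hM⟩ := hbdd
  by_contra! hlt
  have hxy : x < y := hxy.lt_of_ne (by rintro rfl; exact hlt.false)
  set r := (f y - f x) / (y - x)
  have hr : 0 < r := div_pos (sub_pos.2 hlt) (sub_pos.2 hxy)
  have hyM : f y ≤ M := hM (Set.mem_image_of_mem f hy)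
  -- Past `y` the graph lies above the line of slope `r`, which exceeds `M` at `z`.
  obtain ⟨z, hz⟩ : ∃ z, z - y = (M + 1 - f y) / r := ⟨_, add_sub_cancel_left y _⟩
  have hyz : y < z := sub_pos.1 (hz ▸ div_pos (by linarith) hr)
  have hzs : z ∈ s := hs hyz.le hy
  have hslope : r ≤ (f z - f y) / (z - y) := hf.slope_mono_adjacent hx hzs hxy hyz
  have hgrowth : M + 1 - f y ≤ f z - f y :=
    calc M + 1 - f y = r * (z - y) := by rw [hz, mul_div_cancel₀ _ hr.ne']
      _ ≤ f z - f y := (le_div_iff₀ (sub_pos.2 hyz)).1 hslope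
  have hzM : f z ≤ M := hM (Set.mem_image_of_mem f hzs)
  linarith

end Convex

/-- The transformation `𝕋_k`, which restarts `c` at `k` and takes the value `c k` as the new unit on
both axes. It is meaningful only for `c k ≠ 0`; for `c k = 0`, division by zero makes it the zero
function. -/
noncomputable def tehranchiTransform (k : ℝ) (c : ℝ → ℝ) : ℝ → ℝ :=
  fun m => c (k + c k * m) / c k

namespace TehranchiSpace

variable {c : ℝ → ℝ} {k m : ℝ}

theorem convexOn (hc : TehranchiSpace c) : ConvexOn ℝ (Set.Ici 0) c :=
  hc.1

theorem one_sub_le (hc : TehranchiSpace c) (hm : 0 ≤ m) : 1 - m ≤ c m :=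
  (le_max_left _ _).trans (hc.2 m hm).1

theorem nonneg (hc : TehranchiSpace c) (hm : 0 ≤ m) : 0 ≤ c m :=
  (le_max_right _ _).trans (hc.2 m hm).1

theorem le_one (hc : TehranchiSpace c) (hm : 0 ≤ m) : c m ≤ 1 :=
  (hc.2 m hm).2

theorem apply_zero (hc : TehranchiSpace c) : c 0 = 1 :=
  (hc.le_one le_rfl).antisymm (by simpa only [sub_zero] using hc.one_sub_le le_rfl)

theorem antitoneOn (hc : TehranchiSpace c) : AntitoneOn c (Set.Ici 0) :=
  antitoneOn_of_convexOn_of_bddAbove (isUpperSet_Ici 0) hc.convexOn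
    ⟨1, Set.forall_mem_image.2 fun _ hm => hc.le_one hm⟩

theorem monotoneOn_add_id (hc : TehranchiSpace c) :
    MonotoneOn (fun m => c m + m) (Set.Ici 0) := by
  have hconv : ConvexOn ℝ (Set.Ici 0) fun m => c m + m :=
    hc.convexOn.add (convexOn_id (convex_Ici 0))
  have hmin : IsMinOn (fun m => c m + m) (Set.Ici 0) 0 := fun m hm => by
    change c 0 + 0 ≤ c m + m
    linarith [hc.apply_zero, hc.one_sub_le hm]
  simpa only [Set.inter_self] using
    monotoneOn_of_convexOn_of_isMinOn hconv Set.self_mem_Ici hmin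

theorem convexOn_tehranchiTransform (hc : TehranchiSpace c) (hk : 0 ≤ k) :
    ConvexOn ℝ (Set.Ici 0) (tehranchiTransform k c) := by
  have hck : 0 ≤ c k := hc.nonneg hk
  have hrescale : ConvexOn ℝ (Set.Ici 0) fun m => c (k + c k * m) :=
    ((hc.convexOn.translate_right k).comp_linearMap (LinearMap.mulLeft ℝ (c k))).subset
      (fun _ hm => add_nonneg hk (mul_nonneg hck hm)) (convex_Ici 0)
  unfold tehranchiTransform
  simpa only [smul_eq_mul, div_eq_inv_mul] using
    hrescale.smul (inv_nonneg.2 hck)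

theorem tehranchiTransform_nonneg (hc : TehranchiSpace c) (hk : 0 ≤ k) (hm : 0 ≤ m) :
    0 ≤ tehranchiTransform k c m :=
  have hck : 0 ≤ c k := hc.nonneg hk
  div_nonneg (hc.nonneg (add_nonneg hk (mul_nonneg hck hm))) hck

theorem tehranchiTransform_le_one (hc : TehranchiSpace c) (hk : 0 ≤ k) (hm : 0 ≤ m) :
    tehranchiTransform k c m ≤ 1 := by
  have hck : 0 ≤ c k := hc.nonneg hk
  have hkm : k ≤ k + c k * m := le_add_of_nonneg_right (mul_nonneg hck hm)
  exact div_le_one_of_le₀ (hc.antitoneOn hk (hk.trans hkm) hkm) hck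

theorem one_sub_le_tehranchiTransform (hc : TehranchiSpace c) (hk : 0 ≤ k) (hck : 0 < c k)
    (hm : 0 ≤ m) : 1 - m ≤ tehranchiTransform k c m := by
  have hkm : k ≤ k + c k * m := le_add_of_nonneg_right (mul_nonneg hck.le hm)
  have hslope : c k + k ≤ c (k + c k * m) + (k + c k * m) :=
    hc.monotoneOn_add_id hk (hk.trans hkm) hkm
  rw [tehranchiTransform, le_div_iff₀ hck]
  linarith

protected theorem tehranchiTransform (hc : TehranchiSpace c) (hk : 0 ≤ k) (hck : 0 < c k) :
    TehranchiSpace (tehranchiTransform k c) :=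
  ⟨hc.convexOn_tehranchiTransform hk, fun _ hm =>
    ⟨max_le (hc.one_sub_le_tehranchiTransform hk hck hm) (hc.tehranchiTransform_nonneg hk hm),
      hc.tehranchiTransform_le_one hk hm⟩⟩

theorem tehranchiTransform_zero (hc : TehranchiSpace c) : tehranchiTransform 0 c = c := by
  ext m
  rw [tehranchiTransform, hc.apply_zero, zero_add, one_mul, div_one]

end TehranchiSpace

/-- For `c` in the Tehranchi space and `k ≥ 0` with `c k > 0`, the transform
`𝕋_k c : m ↦ c (k + c k · m) / c k` again belongs to the Tehranchi space, and
`𝕋_0 c = c`. -/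
theorem Tk_maps_Tehranchi_into_itself (c : ℝ → ℝ) (hc : TehranchiSpace c)
    (k : ℝ) (hk : 0 ≤ k) (hck : 0 < c k) :
    TehranchiSpace (fun m => c (k + c k * m) / c k) ∧
    ∀ m : ℝ, 0 ≤ m → c (0 + c 0 * m) / c 0 = c m :=
  ⟨hc.tehranchiTransform hk hck, fun m _ => congrFun hc.tehranchiTransform_zero m⟩
end

section
/- Let c be in the Tehranchi space 𝕔 with c(k) > 0 for all k ≥ 0. Then for every fixed m ≥ 0, the limit as k → ∞ of c(k + c(k)·m)/c(k) equals 1; that is, 𝕋_k c converges pointwise to the constant function 1 as k → ∞. -/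
/-!
A convex function `f` on `[a, ∞)` with `f x = o(x)` has secant slopes tending to `0`. Since the
slopes at `x` are monotone in the other endpoint, all of them lie between the slope of the chord
from `a` to `x` and `0`. Hence `f v - f u = o(v - u)` as `u → ∞`, and the choice
`u = k`, `v = k + c k * m` makes the increment of `c` negligible against `c k`.
-/

open Asymptotics Filter Set Topology

theorem tendsto_slope_zero_of_isLittleO_id {f : ℝ → ℝ} (hf : f =o[atTop] (id : ℝ → ℝ)) (x : ℝ) :
    Tendsto (slope f x) atTop (𝓝 0) := by
  have hnum : (fun y => f y - f x) =o[atTop] (id : ℝ → ℝ) :=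
    hf.sub (isLittleO_const_id_atTop (f x))
  have hden : (fun y => y - x) ~[atTop] (id : ℝ → ℝ) :=
    IsEquivalent.refl.sub_isLittleO (isLittleO_const_id_atTop x)
  rw [slope_fun_def_field]
  exact (hnum.trans_isBigO hden.isBigO_symm).tendsto_div_nhds_zero

section SublinearConvex

variable {f : ℝ → ℝ} {a : ℝ}

theorem slope_nonpos_of_convexOn_Ici (hconv : ConvexOn ℝ (Ici a) f)
    (hf : f =o[atTop] (id : ℝ → ℝ)) {x y : ℝ} (hx : a ≤ x) (hy : a ≤ y) (hxy : y ≠ x) :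
    slope f x y ≤ 0 := by
  refine ge_of_tendsto (tendsto_slope_zero_of_isLittleO_id hf x) ?_
  filter_upwards [eventually_ge_atTop y, eventually_gt_atTop x] with z hyz hxz
  exact hconv.slope_mono hx ⟨hy, hxy⟩ ⟨hx.trans hxz.le, hxz.ne'⟩ hyz

theorem abs_sub_le_abs_slope_mul_of_convexOn_Ici (hconv : ConvexOn ℝ (Ici a) f)
    (hf : f =o[atTop] (id : ℝ → ℝ)) {x y : ℝ} (hx : a < x) (hy : a ≤ y) :
    |f y - f x| ≤ |slope f a x| * |y - x| := by
  rcases eq_or_ne y x with rfl | hxy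
  · simp
  have hlower : slope f a x ≤ slope f x y := by
    rw [slope_comm f a x]
    exact hconv.slope_mono hx.le ⟨self_mem_Ici, hx.ne⟩ ⟨hy, hxy⟩ hy
  have hupper : slope f x y ≤ 0 := slope_nonpos_of_convexOn_Ici hconv hf hx.le hy hxy
  calc |f y - f x| = |slope f x y| * |y - x| := by
        rw [← abs_mul, mul_comm, ← smul_eq_mul, sub_smul_slope, vsub_eq_sub]
    _ ≤ |slope f a x| * |y - x| := by
        gcongr ?_ * _
        exact abs_le_abs_of_nonpos hupper hlower

theorem isLittleO_comp_sub_comp_of_convexOn_Ici {α : Type*} {l : Filter α} {u v : α → ℝ}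
    (hconv : ConvexOn ℝ (Ici a) f) (hf : f =o[atTop] (id : ℝ → ℝ))
    (hu : Tendsto u l atTop) (hv : ∀ᶠ t in l, a ≤ v t) :
    (fun t => f (v t) - f (u t)) =o[l] fun t => v t - u t := by
  have hbound : (fun t => f (v t) - f (u t)) =O[l] fun t => slope f a (u t) * (v t - u t) := by
    refine .of_bound' ?_
    filter_upwards [hu.eventually_gt_atTop a, hv] with t hut hvt
    simpa only [Real.norm_eq_abs, abs_mul] using
      abs_sub_le_abs_slope_mul_of_convexOn_Ici hconv hf hut hvt
  have hslope : (fun t => slope f a (u t)) =o[l] fun _ => (1 : ℝ) :=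
    (isLittleO_one_iff ℝ).2 ((tendsto_slope_zero_of_isLittleO_id hf a).comp hu)
  simpa only [one_mul] using hbound.trans_isLittleO (hslope.mul_isBigO (isBigO_refl _ l))

theorem isEquivalent_comp_add_mul_of_convexOn_Ici (hconv : ConvexOn ℝ (Ici a) f)
    (hf : f =o[atTop] (id : ℝ → ℝ)) (m : ℝ) :
    (fun k => f (k + f k * m)) ~[atTop] f := by
  have hO : (fun k => f k * m) =O[atTop] f := by
    simpa only [mul_comm] using isBigO_const_mul_self m f atTop
  have htop : Tendsto (fun k => k + f k * m) atTop atTop :=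
    (IsEquivalent.refl.add_isLittleO (hO.trans_isLittleO hf)).symm.tendsto_atTop tendsto_id
  have hincr : (fun k => f (k + f k * m) - f k) =o[atTop] fun k => f k * m := by
    simpa only [id, add_sub_cancel_left] using
      isLittleO_comp_sub_comp_of_convexOn_Ici hconv hf tendsto_id (htop.eventually_ge_atTop a)
  exact hincr.trans_isBigO hO

end SublinearConvex

theorem Tk_tendsto_one_general {c : ℝ → ℝ} {a : ℝ} (hconv : ConvexOn ℝ (Ici a) c)
    (hc : c =o[atTop] (id : ℝ → ℝ)) (hne : ∀ᶠ k in atTop, c k ≠ 0) (m : ℝ) :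
    Tendsto (fun k => c (k + c k * m) / c k) atTop (𝓝 1) :=
  (isEquivalent_iff_tendsto_one hne).1 (isEquivalent_comp_add_mul_of_convexOn_Ici hconv hc m)

theorem TehranchiSpace.isLittleO_id {c : ℝ → ℝ} (hc : TehranchiSpace c) :
    c =o[atTop] (id : ℝ → ℝ) := by
  have hbounded : c =O[atTop] fun _ => (1 : ℝ) := by
    refine .of_norm_eventuallyLE ?_
    filter_upwards [eventually_ge_atTop 0] with k hk
    obtain ⟨hlower, hupper⟩ := hc.2 k hk
    rwa [Real.norm_of_nonneg ((le_max_right _ _).trans hlower)]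
  exact hbounded.trans_isLittleO (isLittleO_const_id_atTop 1)

/-- For `c` in the Tehranchi space with `c > 0` on `[0, ∞)` and every fixed `m ≥ 0`,
`(𝕋_k c)(m) = c (k + c k · m) / c k → 1` as `k → ∞`. -/
theorem Tk_tendsto_one (c : ℝ → ℝ) (hc : TehranchiSpace c)
    (hpos : ∀ k : ℝ, 0 ≤ k → 0 < c k) (m : ℝ) (hm : 0 ≤ m) :
    Filter.Tendsto (fun k => c (k + c k * m) / c k) Filter.atTop (nhds 1) :=
  Tk_tendsto_one_general hc.1 hc.isLittleO_id
    ((eventually_ge_atTop 0).mono fun k hk => (hpos k hk).ne') m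
end

section
/- Let c be in the Tehranchi space 𝕔, differentiable on (0, ∞), and let a, b ≥ 0 be such that c(a) > 0, c'(a) < 0, and, at the point a - (c(a)/c'(a))·b, also c > 0 and c' < 0. Then 𝕌_b(𝕌_a c) = 𝕌_{a - (c(a)/c'(a))·b} c; that is, iterating the transformation 𝕌 twice with relative underlying moneynesses a and b yields the single transformation 𝕌 with relative underlying moneyness a - (c(a)/c'(a))·b. -/
/-- The transformation `𝕌_k c : m ↦ c (k - (c k / c' k)·m) / c k`. -/
noncomputable def Uk (c : ℝ → ℝ) (k : ℝ) : ℝ → ℝ :=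
  fun m => c (k - c k / deriv c k * m) / c k

/-!
`𝕌_k c` normalizes `c` at `k`: it is unchanged by vertical rescaling of `c`, and an affine change
of the variable only moves the base point `k`. Since `𝕌_a c` is itself a vertical rescaling of
`m ↦ c (a - q * m)` with `q = c a / c' a`, normalizing it at `b` is normalizing `c` at `a - q * b`.
-/

theorem Uk_div_const (c : ℝ → ℝ) {r : ℝ} (hr : r ≠ 0) (k : ℝ) :
    Uk (fun m => c m / r) k = Uk c k := by
  funext m
  simp only [Uk, deriv_div_const, div_div_div_cancel_right₀ hr]

theorem Uk_comp_mul_left (c : ℝ → ℝ) {q : ℝ} (hq : q ≠ 0) (k : ℝ) :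
    Uk (fun m => c (q * m)) k = Uk c (q * k) := by
  funext m
  have hderiv : deriv (fun m => c (q * m)) k = q * deriv c (q * k) :=
    deriv_comp_mul_left q c k
  have hstep : q * (k - c (q * k) / (q * deriv c (q * k)) * m)
      = q * k - c (q * k) / deriv c (q * k) * m := by
    rw [mul_sub, ← mul_assoc, ← mul_div_assoc, mul_div_mul_left _ _ hq]
  simp only [Uk, hderiv, hstep]

theorem Uk_comp_const_sub (c : ℝ → ℝ) (p k : ℝ) :
    Uk (fun m => c (p - m)) k = Uk c (p - k) := by
  funext m
  have hstep : p - (k - c (p - k) / -deriv c (p - k) * m)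
      = p - k - c (p - k) / deriv c (p - k) * m := by
    rw [div_neg]
    ring
  simp only [Uk, deriv_comp_const_sub, hstep]

theorem Uk_semigroup_general (c : ℝ → ℝ) (a b : ℝ) (hca : c a ≠ 0) (h'a : deriv c a ≠ 0)
    (_hcA : c (a - c a / deriv c a * b) ≠ 0)
    (_h'A : deriv c (a - c a / deriv c a * b) ≠ 0) :
    Uk (Uk c a) b = Uk c (a - c a / deriv c a * b) :=
  calc Uk (Uk c a) b
    _ = Uk (fun m => c (a - c a / deriv c a * m)) b := Uk_div_const _ hca b
    _ = Uk (fun m => c (a - m)) (c a / deriv c a * b) :=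
      Uk_comp_mul_left (fun m => c (a - m)) (div_ne_zero hca h'a) b
    _ = Uk c (a - c a / deriv c a * b) := Uk_comp_const_sub c a _

/-- Iterates of `𝕌`: for `c` in the Tehranchi space, differentiable on `(0, ∞)`, with
`c > 0` and `c' < 0` at `a` and at `a - (c a / c' a)·b`, one has
`𝕌_b (𝕌_a c) = 𝕌_{a - (c a / c' a)·b} c`. -/
theorem Uk_semigroup (c : ℝ → ℝ) (hc : TehranchiSpace c)
    (hdiff : DifferentiableOn ℝ c (Set.Ioi 0))
    (a b : ℝ) (ha : 0 ≤ a) (hb : 0 ≤ b)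
    (hca : 0 < c a) (hda : DifferentiableAt ℝ c a) (h'a : deriv c a < 0)
    (hcA : 0 < c (a - c a / deriv c a * b))
    (hdA : DifferentiableAt ℝ c (a - c a / deriv c a * b))
    (h'A : deriv c (a - c a / deriv c a * b) < 0) :
    Uk (Uk c a) b = Uk c (a - c a / deriv c a * b) := by
  exact Uk_semigroup_general c a b hca.ne' h'a.ne hcA.ne' h'A.ne
end

section
/- Let F : ℝ → (0, 1) be continuous and strictly increasing with limit 0 at -∞ and limit 1 at +∞, so that F has an inverse F⁻¹ : (0, 1) → ℝ. Let S, K > 0 and y ≥ 0, and suppose that X := sup over p ∈ (0, 1) of (S·F(F⁻¹(p) + y) - p·K) is attained at some p* ∈ (0, 1). Then S = K·ψ(X/K, y; F), where ψ(a, y; F) := inf over r ∈ ℝ of (a + F(r - y))/F(r). Equivalently, S = inf over r ∈ ℝ of (X + K·F(r - y))/F(r). -/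
/-!
With `r = F⁻¹(p) + y`, the pricing formula reads `X = max_r (S * F r - K * F (r - y))`. Since
`F > 0`, each inequality `S * F r - K * F (r - y) ≤ X` is equivalent to
`S ≤ (X + K * F (r - y)) / F r`, with equality in one exactly when there is equality in the other,
so a maximizer of the first expression is a minimizer of the quotient, whose minimum is then `S`.
-/

/-- Dinkelbach's parametrization of a fractional program. -/
theorem isGreatest_range_mul_sub_iff_isLeast_range_add_div {ι : Sort*} {𝕜 : Type*} [Field 𝕜]
    [LinearOrder 𝕜] [IsStrictOrderedRing 𝕜] {f g : ι → 𝕜} (hf : ∀ i, 0 < f i) {s x : 𝕜} :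
    IsGreatest (Set.range fun i ↦ s * f i - g i) x ↔
      IsLeast (Set.range fun i ↦ (x + g i) / f i) s := by
  have value_eq_iff (i : ι) : s * f i - g i = x ↔ (x + g i) / f i = s := by
    rw [sub_eq_iff_eq_add, div_eq_iff (hf i).ne', eq_comm]
  have value_le_iff (i : ι) : s * f i - g i ≤ x ↔ s ≤ (x + g i) / f i := by
    rw [sub_le_iff_le_add, le_div_iff₀ (hf i)]
  refine and_congr (exists_congr value_eq_iff) ?_
  simp only [mem_upperBounds, mem_lowerBounds, Set.forall_mem_range, value_le_iff]

theorem image_mul_apply_add_sub_range {G R : Type*} [AddGroup G] [CommMagma R] [Sub R]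
    {F : G → R} {Finv : R → G} (hFinv : Function.LeftInverse Finv F) (S K : R) (y : G) :
    (fun p ↦ S * F (Finv p + y) - p * K) '' Set.range F =
      Set.range fun r ↦ S * F r - K * F (r - y) := by
  rw [← Set.range_comp, ← (Equiv.addRight y).surjective.range_comp (fun r ↦ S * F r - _)]
  simp only [Function.comp_def, hFinv _, Equiv.coe_addRight, add_sub_cancel_right, mul_comm]

theorem mul_sInf_range_div_add_div {ι : Sort*} {K : ℝ} (hK : 0 < K) (X : ℝ) (f g : ι → ℝ) :
    K * sInf (Set.range fun i ↦ (X / K + g i) / f i) =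
      sInf (Set.range fun i ↦ (X + K * g i) / f i) := by
  simp only [sInf_range, Real.mul_iInf_of_nonneg hK.le, ← mul_div_assoc, mul_add,
    mul_div_cancel₀ X hK.ne']

theorem cpt_inversion_general {G : Type*} [AddGroup G] {F : G → ℝ} {Finv : ℝ → G}
    (hpos : ∀ x, 0 < F x) (hFinv : Function.LeftInverse Finv F) {S K X : ℝ} {y : G} (hK : 0 < K)
    (hX : IsGreatest ((fun p ↦ S * F (Finv p + y) - p * K) '' Set.range F) X) :
    S = K * sInf (Set.range fun r ↦ (X / K + F (r - y)) / F r) ∧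
    S = sInf (Set.range fun r ↦ (X + K * F (r - y)) / F r) := by
  rw [image_mul_apply_add_sub_range hFinv,
    isGreatest_range_mul_sub_iff_isLeast_range_add_div hpos] at hX
  rw [mul_sInf_range_div_add_div hK, and_self]
  exact hX.csInf_eq.symm

/-- Inversion of the Carr-Pelts-Tehranchi pricing formula: if `F : ℝ → (0,1)` is a
continuous strictly increasing cdf-like function with inverse `Finv` on `(0,1)`, and
the Call price `X = sup_{p ∈ (0,1)} (S·F(F⁻¹(p) + y) - p·K)` is attained, then
`S = K·ψ(X/K, y; F)` where `ψ(a, y; F) = inf_r (a + F(r - y))/F(r)`; equivalently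
`S = inf_r (X + K·F(r - y))/F(r)`. -/
theorem cpt_inversion (F Finv : ℝ → ℝ)
    (hFc : Continuous F) (hFm : StrictMono F)
    (hrange : ∀ x : ℝ, F x ∈ Set.Ioo (0:ℝ) 1)
    (hbot : Filter.Tendsto F Filter.atBot (nhds 0))
    (htop : Filter.Tendsto F Filter.atTop (nhds 1))
    (hFinv : ∀ p ∈ Set.Ioo (0:ℝ) 1, F (Finv p) = p)
    (S K y X : ℝ) (hS : 0 < S) (hK : 0 < K) (hy : 0 ≤ y)
    (hX : IsGreatest ((fun p => S * F (Finv p + y) - p * K) '' Set.Ioo 0 1) X) :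
    S = K * sInf (Set.range (fun r => (X / K + F (r - y)) / F r)) ∧
    S = sInf (Set.range (fun r => (X + K * F (r - y)) / F r)) := by
  have range_eq : Set.range F = Set.Ioo 0 1 :=
    (Set.range_subset_iff.2 hrange).antisymm fun p hp ↦ ⟨Finv p, hFinv p hp⟩
  exact cpt_inversion_general (fun x ↦ (hrange x).1)
    (fun x ↦ hFm.injective (hFinv _ (hrange x))) hK (range_eq ▸ hX)
end

section
/- Let f : ℝ → (0, ∞) be a differentiable probability density function (∫_ℝ f = 1) which is strictly log-concave in the sense that f'/f is strictly decreasing, and let F(r) = ∫_{-∞}^r f(t) dt be its cumulative distribution function. Then for every y > 0, the function δ(r; y) := (f(r - y)/f(r))·F(r) - F(r - y) is strictly increasing in r on ℝ. -/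
open MeasureTheory

/-!
Put `g t = f (t - y) / f t` and `F r = ∫_{-∞}^r f`. Since `f (t - y) = g t * f t`, translation gives
`δ(r; y) = ∫_{-∞}^r (g r - g t) * f t dt`. Strict log-concavity of `f` makes `g` strictly
increasing, so for `r < s` the integrand grows pointwise and the new range `(r, s]` contributes a
nonnegative amount: `δ(s; y) - δ(r; y) ≥ (g s - g r) * F r > 0`.
-/

open Set

theorem strictMono_comp_sub_sub_of_strictConcaveOn {𝕜 : Type*} [Field 𝕜] [LinearOrder 𝕜]
    [IsStrictOrderedRing 𝕜] {h : 𝕜 → 𝕜} (hh : StrictConcaveOn 𝕜 univ h) {y : 𝕜} (hy : 0 < y) :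
    StrictMono fun r => h (r - y) - h r := by
  intro r s hrs
  have secant_lt {a b c : 𝕜} (hb : b ≠ a) (hc : c ≠ a) (hbc : b < c) :
      slope h a c < slope h a b := by
    simpa only [slope_def_field] using
      hh.secant_strict_mono (mem_univ a) (mem_univ b) (mem_univ c) hb hc hbc
  have hslope : slope h (s - y) s < slope h (r - y) r := calc
    slope h (s - y) s = slope h s (s - y) := slope_comm ..
    _ < slope h s (r - y) := secant_lt (by linarith) (by linarith) (by linarith)
    _ = slope h (r - y) s := slope_comm ..
    _ < slope h (r - y) r := secant_lt (by linarith) (by linarith) hrs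
  simp only [slope_def_field, sub_sub_cancel, div_lt_div_iff_of_pos_right hy] at hslope
  linarith

theorem strictMono_comp_sub_div_of_strictConcaveOn_log {f : ℝ → ℝ} (hf : ∀ x, 0 < f x)
    (hlog : StrictConcaveOn ℝ univ fun x => Real.log (f x)) {y : ℝ} (hy : 0 < y) :
    StrictMono fun r => f (r - y) / f r := by
  simpa only [Real.exp_sub, Real.exp_log (hf _), Function.comp_def] using
    Real.exp_strictMono.comp (strictMono_comp_sub_sub_of_strictConcaveOn hlog hy)

theorem strictConcaveOn_log_of_strictAnti_deriv_div {f : ℝ → ℝ} (hf : ∀ x, f x ≠ 0)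
    (hdiff : Differentiable ℝ f) (hanti : StrictAnti fun x => deriv f x / f x) :
    StrictConcaveOn ℝ univ fun x => Real.log (f x) := by
  have hderiv : deriv (fun x => Real.log (f x)) = fun x => deriv f x / f x :=
    funext fun x => deriv.log (hdiff x) (hf x)
  exact StrictAnti.strictConcaveOn_univ_of_deriv (hdiff.log hf).continuous (hderiv ▸ hanti)

section Translation

variable {G E : Type*} [AddCommGroup G] [LinearOrder G] [IsOrderedAddMonoid G]
  [MeasurableSpace G] [MeasurableAdd G] {μ : Measure G} [μ.IsAddRightInvariant]
  [NormedAddCommGroup E]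

theorem setIntegral_Iic_comp_sub_right [NormedSpace ℝ E] (f : G → E) (y r : G) :
    ∫ t in Iic r, f (t - y) ∂μ = ∫ t in Iic (r - y), f t ∂μ := by
  rw [← (measurePreserving_sub_right μ y).setIntegral_preimage_emb
    (measurableEmbedding_subRight y) f, preimage_sub_const_Iic, sub_add_cancel]

theorem integrableOn_Iic_comp_sub_right {f : G → E} {y r : G} :
    IntegrableOn (fun t => f (t - y)) (Iic r) μ ↔ IntegrableOn f (Iic (r - y)) μ := by
  rw [← (measurePreserving_sub_right μ y).integrableOn_comp_preimage
    (measurableEmbedding_subRight y) (s := Iic (r - y)), preimage_sub_const_Iic, sub_add_cancel,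
    Function.comp_def]

end Translation

theorem strictMono_mul_setIntegral_Iic_sub {α : Type*} [LinearOrder α]
    [TopologicalSpace α] [OrderClosedTopology α] [MeasurableSpace α] [OpensMeasurableSpace α]
    {μ : Measure α} {f g : α → ℝ} (hg : StrictMono g) (hf : ∀ x, 0 ≤ f x)
    (hF : ∀ r, 0 < ∫ t in Iic r, f t ∂μ)
    (hgf : ∀ r, IntegrableOn (fun t => g t * f t) (Iic r) μ) :
    StrictMono fun r => g r * (∫ t in Iic r, f t ∂μ) - ∫ t in Iic r, g t * f t ∂μ := by
  intro r s hrs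
  have hf_int : IntegrableOn f (Iic s) μ := .of_integral_ne_zero (hF s).ne'
  have split {φ : α → ℝ} (hφ : IntegrableOn φ (Iic s) μ) :
      ∫ t in Iic s, φ t ∂μ = (∫ t in Iic r, φ t ∂μ) + ∫ t in Ioc r s, φ t ∂μ := by
    rw [← Iic_union_Ioc_eq_Iic hrs.le, setIntegral_union (Iic_disjoint_Ioc le_rfl)
      measurableSet_Ioc (hφ.mono_set (Iic_subset_Iic.2 hrs.le)) (hφ.mono_set Ioc_subset_Iic_self)]
  have hIoc : ∫ t in Ioc r s, g t * f t ∂μ ≤ g s * ∫ t in Ioc r s, f t ∂μ := by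
    rw [← integral_const_mul]
    refine setIntegral_mono_on ((hgf s).mono_set Ioc_subset_Iic_self)
      ((hf_int.mono_set Ioc_subset_Iic_self).const_mul _) measurableSet_Ioc fun t ht => ?_
    exact mul_le_mul_of_nonneg_right (hg.monotone ht.2) (hf t)
  have hIic : g r * ∫ t in Iic r, f t ∂μ < g s * ∫ t in Iic r, f t ∂μ :=
    mul_lt_mul_of_pos_right (hg hrs) (hF r)
  simp only [split hf_int, split (hgf s), mul_add]
  linarith

theorem delta_strictMono_general {f : ℝ → ℝ} (hf : ∀ x, 0 < f x)
    (hint : ∀ r, IntegrableOn f (Iic r))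
    (hlog : StrictConcaveOn ℝ univ fun x => Real.log (f x)) {y : ℝ} (hy : 0 < y) :
    StrictMono fun r => f (r - y) / f r * (∫ t in Iic r, f t) - ∫ t in Iic (r - y), f t := by
  have hF (r : ℝ) : 0 < ∫ t in Iic r, f t := by
    have hsupp : Function.support f = univ := eq_univ_of_forall fun x => (hf x).ne'
    rw [setIntegral_pos_iff_support_of_nonneg_ae (.of_forall fun x => (hf x).le) (hint r), hsupp]
    simp
  have hmul (t : ℝ) : f (t - y) / f t * f t = f (t - y) := div_mul_cancel₀ _ (hf t).ne'
  simpa only [hmul, setIntegral_Iic_comp_sub_right] using strictMono_mul_setIntegral_Iic_sub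
    (strictMono_comp_sub_div_of_strictConcaveOn_log hf hlog hy) (fun x => (hf x).le) hF
    fun r => by simpa only [hmul] using integrableOn_Iic_comp_sub_right.2 (hint (r - y))

/-- For a strictly log-concave differentiable positive density `f` (i.e. `f'/f` is
strictly decreasing, `∫ f = 1`) with cdf `F r = ∫_{-∞}^r f`, the function
`δ(r; y) = (f(r - y)/f(r))·F(r) - F(r - y)` is strictly increasing in `r`, for every
`y > 0`. -/
theorem delta_strictMono (f : ℝ → ℝ)
    (hf_pos : ∀ x : ℝ, 0 < f x)
    (hdiff : Differentiable ℝ f)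
    (hdens : ∫ x : ℝ, f x = 1)
    (hlogconcave : StrictAnti (fun x => deriv f x / f x))
    (y : ℝ) (hy : 0 < y) :
    StrictMono (fun r =>
      f (r - y) / f r * (∫ t in Set.Iic r, f t) - ∫ t in Set.Iic (r - y), f t) := by
  have hint : Integrable f := .of_integral_ne_zero (hdens ▸ one_ne_zero)
  exact delta_strictMono_general hf_pos (fun _ => hint.integrableOn)
    (strictConcaveOn_log_of_strictAnti_deriv_div (fun x => (hf_pos x).ne') hdiff hlogconcave) hy
end
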